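/- Let H be a Hilbert space, ψ ∈ H a unit vector, and {A_x}_{x∈X} a finite family of positive operators on H with Σ_x A_x = I and Σ_x ⟨ψ, A_x² ψ⟩ > 1 − ε. Then, working with n×n matrices (finite-dimensional case), there exists a family of orthogonal projections {P_x}_{x∈X} with Σ_x P_x = I such that Σ_x ⟨ψ, (A_x − P_x)² ψ⟩ < 9ε. -/

import Mathlib

open Matrix ComplexOrder

namespace Ortho

/-- squared Euclidean norm -/
noncomputable def N {ι : Type*} [Fintype ι] (v : ι → ℂ) : ℝ := ∑ i, ‖v i‖ ^ 2

lemma N_nonneg {ι : Type*} [Fintype ι] (v : ι → ℂ) : 0 ≤ N v :=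
  Finset.sum_nonneg fun _ _ => by positivity

lemma N_eq {ι : Type*} [Fintype ι] (v : ι → ℂ) : star v ⬝ᵥ v = (N v : ℂ) := by
  simp only [N, dotProduct, Pi.star_apply, RCLike.star_def, Complex.conj_mul']
  push_cast
  rfl

lemma N_mulVec {ι κ : Type*} [Fintype ι] [Fintype κ] (U : Matrix ι κ ℂ) (v : κ → ℂ) :
    (N (U *ᵥ v) : ℂ) = star v ⬝ᵥ ((Uᴴ * U) *ᵥ v) := by
  rw [← N_eq, star_mulVec, ← mulVec_mulVec, dotProduct_mulVec, dotProduct_mulVec, vecMul_vecMul,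
    dotProduct_mulVec, vecMul_vecMul]

lemma N_iso {ι κ : Type*} [Fintype ι] [Fintype κ] [DecidableEq κ] (U : Matrix ι κ ℂ)
    (hU : Uᴴ * U = 1) (v : κ → ℂ) : N (U *ᵥ v) = N v := by
  have := N_mulVec U v
  rw [hU, one_mulVec, N_eq] at this
  exact_mod_cast this

lemma N_add_le {ι : Type*} [Fintype ι] (v w : ι → ℂ) :
    N (v + w) ≤ 3 / 2 * N v + 3 * N w := by
  simp only [N, Finset.mul_sum, ← Finset.sum_add_distrib]
  refine Finset.sum_le_sum fun i _ => ?_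
  have h1 : ‖v i + w i‖ ≤ ‖v i‖ + ‖w i‖ := norm_add_le _ _
  have h0 := norm_nonneg (v i + w i)
  have := pow_le_pow_left₀ h0 h1 2
  simp only [Pi.add_apply]
  nlinarith [sq_nonneg (‖v i‖ - 2 * ‖w i‖)]

lemma norm_add_sq_le2 (v w : ℂ) : ‖v + w‖ ^ 2 ≤ 2 * ‖v‖ ^ 2 + 2 * ‖w‖ ^ 2 := by
  have h1 : ‖v + w‖ ≤ ‖v‖ + ‖w‖ := norm_add_le _ _
  have := pow_le_pow_left₀ (norm_nonneg (v + w)) h1 2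
  nlinarith [sq_nonneg (‖v‖ - ‖w‖)]

lemma extend_cols {ι κ : Type*} [Fintype ι] [Fintype κ] [DecidableEq κ]
    (hc : Fintype.card ι = Fintype.card κ) (R : Matrix ι κ ℂ) (l : κ → ℝ) (hl : ∀ k, 0 ≤ l k)
    (hR : Rᴴ * R = diagonal (fun k => (l k : ℂ))) :
    ∃ B : Matrix ι κ ℂ, Bᴴ * B = 1 ∧ R = B * diagonal (fun k => ((√(l k) : ℝ) : ℂ)) := by
  classical
  have hin : ∀ k k', ∑ i, star (R i k) * R i k' = if k = k' then (l k : ℂ) else 0 := by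
    intro k k'
    have := congrFun (congrFun hR k) k'
    simpa [Matrix.mul_apply, diagonal_apply] using this
  let v : κ → EuclideanSpace ℂ ι := fun k => WithLp.toLp 2 (fun i => ((√(l k))⁻¹ : ℝ) * R i k)
  let s : Set κ := {k | l k ≠ 0}
  have hv : Orthonormal ℂ (s.domRestrict v) := by
    rw [orthonormal_iff_ite]
    rintro ⟨k, hk⟩ ⟨k', hk'⟩
    have hk : l k ≠ 0 := hk
    have h1 : inner ℂ (v k) (v k') =
        (((√(l k))⁻¹ * (√(l k'))⁻¹ : ℝ) : ℂ) * ∑ i, star (R i k) * R i k' := by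
      simp only [v, PiLp.inner_apply, RCLike.inner_apply, Finset.mul_sum]
      refine Finset.sum_congr rfl fun i _ => ?_
      simp only [map_mul, Complex.conj_ofReal, RCLike.star_def]
      push_cast
      ring
    change inner ℂ (v k) (v k') = _
    rw [h1, hin]
    by_cases hkk : k = k'
    · subst hkk
      simp only [if_true]
      rw [← Complex.ofReal_mul, ← mul_inv, Real.mul_self_sqrt (hl k), inv_mul_cancel₀ hk]
      simp
    · simp [hkk]
  obtain ⟨b, hb⟩ := hv.exists_orthonormalBasis_extension_of_card_eq (by simp [hc])
  refine ⟨Matrix.of fun i k => b k i, ?_, ?_⟩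
  · ext k k'
    have := (orthonormal_iff_ite.1 b.orthonormal) k k'
    rw [PiLp.inner_apply] at this
    simp only [RCLike.inner_apply] at this
    simp only [Matrix.mul_apply, conjTranspose_apply, Matrix.of_apply, Matrix.one_apply,
      RCLike.star_def]
    rw [← this]
    exact Finset.sum_congr rfl fun i _ => mul_comm _ _
  · ext i k
    rw [mul_diagonal, Matrix.of_apply]
    by_cases hk : l k = 0
    · have := hin k k
      simp only [if_true, hk, RCLike.star_def, Complex.conj_mul'] at this
      have h2 : ∑ i, ‖R i k‖ ^ 2 = 0 := by exact_mod_cast this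
      rw [Finset.sum_eq_zero_iff_of_nonneg (fun _ _ => by positivity)] at h2
      have := h2 i (Finset.mem_univ _)
      simp at this
      simp [this, hk]
    · rw [hb k hk]
      have : (√(l k) : ℝ) ≠ 0 := by
        rw [Real.sqrt_ne_zero (hl k)]; exact hk
      simp only [v]
      push_cast
      field_simp

lemma polar {ι κ : Type*} [Fintype ι] [Fintype κ] [DecidableEq ι] [DecidableEq κ]
    (hc : Fintype.card ι = Fintype.card κ) (T : Matrix ι κ ℂ) (hT : ∀ v, N (T *ᵥ v) ≤ N v) :
    ∃ (U : Matrix ι κ ℂ) (D : Matrix κ κ ℂ), Uᴴ * U = 1 ∧ U * Uᴴ = 1 ∧ T = U * D ∧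
      Dᴴ = D ∧ ∀ v, N (v - D *ᵥ v) ≤ N v - N (D *ᵥ v) := by
  have hM : (Tᴴ * T).PosSemidef := posSemidef_conjTranspose_mul_self T
  set G : Matrix κ κ ℂ := (hM.1.eigenvectorUnitary : Matrix κ κ ℂ) with hG
  set l := hM.1.eigenvalues with hl
  have hl0 : ∀ k, 0 ≤ l k := hM.eigenvalues_nonneg
  have hG1 : Gᴴ * G = 1 := by
    have := Unitary.coe_star_mul_self hM.1.eigenvectorUnitary
    simpa [star_eq_conjTranspose] using this
  have hG2 : G * Gᴴ = 1 := mul_eq_one_comm.1 hG1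
  have hsp : Tᴴ * T = G * diagonal (fun k => (l k : ℂ)) * Gᴴ := by
    have := hM.1.spectral_theorem
    rw [Unitary.conjStarAlgAut_apply] at this
    exact this
  have hR : (T * G)ᴴ * (T * G) = diagonal (fun k => (l k : ℂ)) := by
    rw [conjTranspose_mul, Matrix.mul_assoc, ← Matrix.mul_assoc Tᴴ, hsp]
    calc Gᴴ * (G * diagonal (fun k => (l k : ℂ)) * Gᴴ * G)
        = (Gᴴ * G) * diagonal (fun k => (l k : ℂ)) * (Gᴴ * G) := by simp only [Matrix.mul_assoc]
      _ = _ := by rw [hG1]; simp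
  have hl1 : ∀ k, l k ≤ 1 := by
    intro k
    have h1 := hT (G *ᵥ Pi.single k 1)
    rw [N_iso G hG1, mulVec_mulVec] at h1
    have h2 := N_mulVec (T * G) (Pi.single k 1)
    rw [hR] at h2
    have h3 : N (Pi.single k 1 : κ → ℂ) = 1 := by
      have := N_eq (Pi.single k 1 : κ → ℂ)
      simp at this
      exact_mod_cast this.symm
    have h4 : N ((T * G) *ᵥ Pi.single k 1) = l k := by
      simp at h2
      simpa using h2
    linarith
  obtain ⟨B, hB, hRB⟩ := extend_cols hc (T * G) l hl0 hR
  set E := diagonal (fun k => ((√(l k) : ℝ) : ℂ)) with hE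
  have hGN : Gᴴᴴ * Gᴴ = 1 := by rw [conjTranspose_conjTranspose, hG2]
  have hUU : (B * Gᴴ)ᴴ * (B * Gᴴ) = 1 := by
    rw [conjTranspose_mul, conjTranspose_conjTranspose, Matrix.mul_assoc, ← Matrix.mul_assoc Bᴴ,
      hB, Matrix.one_mul, hG2]
  refine ⟨B * Gᴴ, G * E * Gᴴ, hUU, (mul_eq_one_comm_of_equiv (Fintype.equivOfCardEq hc.symm)).1 hUU, ?_, ?_, ?_⟩
  · calc T = T * G * Gᴴ := by rw [Matrix.mul_assoc, hG2, Matrix.mul_one]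
      _ = B * (Gᴴ * G) * E * Gᴴ := by rw [hRB, hG1, Matrix.mul_one]
      _ = _ := by simp only [Matrix.mul_assoc]
  · have : Eᴴ = E := by
      rw [hE, diagonal_conjTranspose]; congr 1; ext k; simp
    simp [conjTranspose_mul, this, Matrix.mul_assoc]
  · intro v
    have hD : ∀ v, (G * E * Gᴴ) *ᵥ v = G *ᵥ (E *ᵥ (Gᴴ *ᵥ v)) := by
      intro v; simp [mulVec_mulVec, Matrix.mul_assoc]
    have e1 : v = G *ᵥ (Gᴴ *ᵥ v) := by rw [mulVec_mulVec, hG2, one_mulVec]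
    rw [hD]
    generalize Gᴴ *ᵥ v = w at *
    subst e1
    rw [← mulVec_sub, N_iso G hG1, N_iso G hG1, N_iso G hG1]
    simp only [N, ← Finset.sum_sub_distrib]
    refine Finset.sum_le_sum fun k _ => ?_
    have h1 : (w - E *ᵥ w) k = ((1 - √(l k) : ℝ) : ℂ) * w k := by
      simp [hE, mulVec_diagonal]; ring
    have h2 : (E *ᵥ w) k = ((√(l k) : ℝ) : ℂ) * w k := by simp [hE, mulVec_diagonal]
    rw [h1, h2, norm_mul, norm_mul, mul_pow, mul_pow, Complex.norm_real, Complex.norm_real,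
      Real.norm_eq_abs, Real.norm_eq_abs, sq_abs, sq_abs]
    have h3 : √(l k) ≤ 1 := Real.sqrt_le_one.2 (hl1 k)
    have h4 := Real.sqrt_nonneg (l k)
    have h5 := sq_nonneg ‖w k‖
    have : (1 - √(l k)) ^ 2 ≤ 1 - √(l k) ^ 2 := by nlinarith
    nlinarith [mul_le_mul_of_nonneg_right this h5]

lemma select {J : Type*} [Fintype J] (n : ℕ) (a c : J → ℝ)
    (ha0 : ∀ j, 0 ≤ a j) (ha1 : ∀ j, a j ≤ 1) (hs : ∑ j, a j = n) :
    ∃ S : Finset J, S.card = n ∧ ∑ j, a j * c j ≤ ∑ j ∈ S, c j := by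
  classical
  have hn : n ≤ (Finset.univ : Finset J).card := by
    have : (n : ℝ) ≤ (Finset.univ : Finset J).card := by
      rw [← hs]
      calc ∑ j, a j ≤ ∑ j : J, (1 : ℝ) := Finset.sum_le_sum fun j _ => ha1 j
        _ = _ := by simp
    exact_mod_cast this
  obtain ⟨S, hS, hmax⟩ := Finset.exists_max_image (Finset.powersetCard n (Finset.univ : Finset J))
    (fun S => ∑ j ∈ S, c j) (Finset.powersetCard_nonempty.2 hn)
  have hScard : S.card = n := (Finset.mem_powersetCard.1 hS).2
  refine ⟨S, hScard, ?_⟩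
  have hex : ∀ i ∈ S, ∀ j ∉ S, c j ≤ c i := by
    intro i hi j hj
    have hj' : j ∉ S.erase i := fun h => hj (Finset.mem_of_mem_erase h)
    have := hmax (insert j (S.erase i)) (Finset.mem_powersetCard.2 ⟨Finset.subset_univ _, by
      rw [Finset.card_insert_of_notMem hj', Finset.card_erase_add_one hi, hScard]⟩)
    rw [Finset.sum_insert hj', ← Finset.add_sum_erase S c hi] at this
    linarith
  obtain ⟨t, ht1, ht2⟩ : ∃ t, (∀ i ∈ S, t ≤ c i) ∧ (∀ j ∉ S, c j ≤ t ∨ a j = 0) := by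
    rcases S.eq_empty_or_nonempty with h | h
    · refine ⟨0, by simp [h], fun j _ => Or.inr ?_⟩
      have : n = 0 := by rw [← hScard, h]; rfl
      subst this
      rw [Nat.cast_zero, Finset.sum_eq_zero_iff_of_nonneg (fun j _ => ha0 j)] at hs
      exact hs j (Finset.mem_univ _)
    · obtain ⟨i, hi, hmin⟩ := Finset.exists_min_image S c h
      exact ⟨c i, hmin, fun j hj => Or.inl (hex i hi j hj)⟩
  have h1 : ∑ j, a j * (c j - t) ≤ ∑ j ∈ S, (c j - t) := by
    rw [← Finset.sum_add_sum_compl S]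
    have : ∑ j ∈ Sᶜ, a j * (c j - t) ≤ 0 := Finset.sum_nonpos fun j hj => by
      rcases ht2 j (Finset.mem_compl.1 hj) with h | h
      · exact mul_nonpos_of_nonneg_of_nonpos (ha0 j) (by linarith)
      · simp [h]
    have : ∑ j ∈ S, a j * (c j - t) ≤ ∑ j ∈ S, (c j - t) := Finset.sum_le_sum fun j hj =>
      mul_le_of_le_one_left (by linarith [ht1 j hj]) (ha1 j)
    linarith
  simp only [mul_sub, Finset.sum_sub_distrib, ← Finset.sum_mul, hs, Finset.sum_const, hScard,
    nsmul_eq_mul] at h1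
  linarith


lemma core {n : ℕ} {X : Type*} [Fintype X] [DecidableEq X] (ψ : Fin n → ℂ) (hψ : N ψ = 1)
    (A G : X → Matrix (Fin n) (Fin n) ℂ) (hG : ∀ x, (G x)ᴴ * G x = 1) (a : X × Fin n → ℝ)
    (ha0 : ∀ p, 0 ≤ a p) (ha1 : ∀ p, a p ≤ 1) (has : ∑ p, a p = n)
    (hA : ∀ x, A x = G x * diagonal (fun i => (a (x, i) : ℂ)) * (G x)ᴴ) (hAsum : ∑ x, A x = 1) :
    ∃ P : X → Matrix (Fin n) (Fin n) ℂ,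
      (∀ x, (P x).IsHermitian ∧ P x * P x = P x) ∧ (∑ x, P x = 1) ∧
      ∑ x, N ((A x - P x) *ᵥ ψ) ≤ 9 * (1 - ∑ x, N (A x *ᵥ ψ)) := by
  classical
  have hG2 : ∀ x, G x * (G x)ᴴ = 1 := fun x => mul_eq_one_comm.1 (hG x)
  let F : (Fin n → ℂ) → X × Fin n → ℂ := fun v p => ((G p.1)ᴴ *ᵥ v) p.2
  have hAv : ∀ x v, A x *ᵥ v = G x *ᵥ (fun i => (a (x, i) : ℂ) * F v (x, i)) := by
    intro x v
    rw [hA, ← mulVec_mulVec, ← mulVec_mulVec]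
    congr 1
    ext i
    simp [mulVec_diagonal, F]
  have hF1 : ∀ v, ∑ p, a p * ‖F v p‖ ^ 2 = N v := by
    intro v
    have h1 : star v ⬝ᵥ ((∑ x, A x) *ᵥ v) = (N v : ℂ) := by
      rw [hAsum, one_mulVec, N_eq]
    rw [Matrix.sum_mulVec, dotProduct_sum] at h1
    have h2 : ∀ x, star v ⬝ᵥ (A x *ᵥ v) = ((∑ i, a (x, i) * ‖F v (x, i)‖ ^ 2 : ℝ) : ℂ) := by
      intro x
      have h3 : star v ᵥ* G x = star ((G x)ᴴ *ᵥ v) := by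
        rw [star_mulVec, conjTranspose_conjTranspose]
      rw [hAv, dotProduct_mulVec, h3]
      simp only [dotProduct, Pi.star_apply, RCLike.star_def]
      push_cast
      refine Finset.sum_congr rfl fun i _ => ?_
      rw [← Complex.conj_mul']
      simp only [F]
      ring
    simp only [h2] at h1
    rw [Fintype.sum_prod_type]
    exact_mod_cast h1
  have hF2 : ∑ x, N (A x *ᵥ ψ) = ∑ p, a p * (a p * ‖F ψ p‖ ^ 2) := by
    rw [Fintype.sum_prod_type]
    refine Finset.sum_congr rfl fun x _ => ?_
    rw [hAv, N_iso _ (hG x), N]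
    refine Finset.sum_congr rfl fun i _ => ?_
    rw [norm_mul, Complex.norm_real, Real.norm_eq_abs, mul_pow, sq_abs]
    ring
  obtain ⟨S, hS, hSle⟩ := select n a (fun p => a p * ‖F ψ p‖ ^ 2) ha0 ha1 has
  rw [← hF2] at hSle
  let T : Matrix S (Fin n) ℂ := Matrix.of fun j k => ((√(a j) : ℝ) : ℂ) * star (G j.1.1 k j.1.2)
  have hTv : ∀ v j, (T *ᵥ v) j = ((√(a j) : ℝ) : ℂ) * F v j := by
    intro v j
    simp [T, F, mulVec, dotProduct, Finset.mul_sum, mul_assoc]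
  have hTn : ∀ v j, ‖(T *ᵥ v) j‖ ^ 2 = a j * ‖F v j‖ ^ 2 := by
    intro v j
    rw [hTv, norm_mul, Complex.norm_real, Real.norm_eq_abs, mul_pow, sq_abs, Real.sq_sqrt (ha0 _)]
  have hTN : ∀ v, N (T *ᵥ v) = ∑ p ∈ S, a p * ‖F v p‖ ^ 2 := by
    intro v
    simp only [N, hTn]
    exact Finset.sum_coe_sort S (fun p => a p * ‖F v p‖ ^ 2)
  have hT : ∀ v, N (T *ᵥ v) ≤ N v := by
    intro v
    rw [hTN, ← hF1]
    exact Finset.sum_le_sum_of_subset_of_nonneg (Finset.subset_univ _)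
      fun p _ _ => mul_nonneg (ha0 p) (sq_nonneg _)
  obtain ⟨U, D, hU1, hU2, hTU, hD, hDN⟩ := polar (by simp [hS]) T hT
  have hUN : Uᴴᴴ * Uᴴ = 1 := by rw [conjTranspose_conjTranspose, hU2]
  have hDU : D * Uᴴ = Tᴴ := by rw [hTU, conjTranspose_mul, hD]
  let E : X → Matrix S S ℂ := fun x => diagonal fun j => if j.1.1 = x then 1 else 0
  have hEH : ∀ x, (E x)ᴴ = E x := by
    intro x
    simp only [E, diagonal_conjTranspose]
    congr 1; ext j; simp only [Pi.star_apply]; split_ifs <;> simp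
  have hEE : ∀ x, E x * E x = E x := by
    intro x
    simp only [E, diagonal_mul_diagonal]
    congr 1; ext j; split_ifs <;> simp
  have hEs : ∑ x, E x = 1 := by
    ext i j
    rw [Matrix.sum_apply]
    by_cases h : i = j
    · subst h; simp [E]
    · simp [E, h]
  let P : X → Matrix (Fin n) (Fin n) ℂ := fun x => Uᴴ * E x * U
  refine ⟨P, fun x => ⟨?_, ?_⟩, ?_, ?_⟩
  · simp [P, IsHermitian, conjTranspose_mul, hEH, Matrix.mul_assoc]
  · calc Uᴴ * E x * U * (Uᴴ * E x * U) = Uᴴ * (E x * (U * Uᴴ) * E x) * U := by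
          simp only [Matrix.mul_assoc]
      _ = _ := by rw [hU2, Matrix.mul_one, hEE]
  · simp only [P]
    rw [← Matrix.sum_mul, ← Matrix.mul_sum, hEs, Matrix.mul_one, hU1]
  set u := U *ᵥ ψ with hu
  have hPψ : ∀ x, P x *ᵥ ψ = Uᴴ *ᵥ (E x *ᵥ u) := by
    intro x; simp [P, hu, mulVec_mulVec, Matrix.mul_assoc]
  have hEu : ∀ x j, (E x *ᵥ u) j = if j.1.1 = x then u j else 0 := by
    intro x j; simp [E, mulVec_diagonal]
  have hPN : ∑ x, N (P x *ᵥ ψ) = ∑ j, ‖u j‖ ^ 2 := by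
    simp only [hPψ, N_iso _ hUN]
    simp only [N, hEu]
    rw [Finset.sum_comm]
    refine Finset.sum_congr rfl fun j _ => ?_
    rw [Finset.sum_eq_single j.1.1] <;> simp +contextual [eq_comm]
  let h : X × Fin n → ℂ := fun p => if hp : p ∈ S then ((√(a p) : ℝ) : ℂ) * u ⟨p, hp⟩ else 0
  have hDP : ∀ x, D *ᵥ (P x *ᵥ ψ) = G x *ᵥ (fun i => h (x, i)) := by
    intro x
    rw [hPψ, mulVec_mulVec, hDU]
    ext k
    simp only [mulVec, dotProduct]
    have e1 : ∀ j : S, Tᴴ k j * (E x *ᵥ u) j =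
        (fun p : X × Fin n => if p.1 = x then G p.1 k p.2 * h p else 0) j := by
      intro j
      rw [hEu]
      have : h j = ((√(a j) : ℝ) : ℂ) * u j := by simp [h]
      simp only [this, T, conjTranspose_apply, Matrix.of_apply, star_mul', star_star, RCLike.star_def,
        Complex.conj_ofReal]
      split_ifs
      · simp; ring
      · simp
    change ∑ j, Tᴴ k j * (E x *ᵥ u) j = _
    simp only [e1]
    rw [Finset.sum_coe_sort S (fun p : X × Fin n => if p.1 = x then G p.1 k p.2 * h p else 0),
      Finset.sum_subset (Finset.subset_univ S), Fintype.sum_prod_type, Finset.sum_eq_single x]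
    · simp
    · intro y _ hy; simp [hy]
    · simp
    · intro p _ hp; simp [h, hp]
  -- splitting sums over all indices
  have hsplit : ∀ f : X × Fin n → ℝ, ∑ p, f p = ∑ j : S, f j + ∑ p ∈ Sᶜ, f p := by
    intro f
    rw [Finset.sum_coe_sort S f, Finset.sum_add_sum_compl]
  have hDPN : ∑ x, N (D *ᵥ (P x *ᵥ ψ)) = ∑ j : S, a j * ‖u j‖ ^ 2 := by
    have : ∑ x, N (D *ᵥ (P x *ᵥ ψ)) = ∑ p, ‖h p‖ ^ 2 := by
      rw [Fintype.sum_prod_type]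
      simp only [hDP, N_iso _ (hG _)]
      rfl
    rw [this, hsplit, Finset.sum_eq_zero (s := Sᶜ), add_zero]
    · refine Finset.sum_congr rfl fun j _ => ?_
      have : h j = ((√(a j) : ℝ) : ℂ) * u j := by simp [h]
      rw [this, norm_mul, Complex.norm_real, Real.norm_eq_abs, mul_pow, sq_abs,
        Real.sq_sqrt (ha0 _)]
    · intro p hp; simp [h, Finset.mem_compl.1 hp]
  -- the residual
  set r := u - T *ᵥ ψ with hr
  have hrN : N r = N (ψ - D *ᵥ ψ) := by
    rw [← N_iso U hU1, mulVec_sub, mulVec_mulVec, ← hTU]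
  have hTD : N (T *ᵥ ψ) = N (D *ᵥ ψ) := by
    rw [hTU, ← mulVec_mulVec, N_iso U hU1]
  set ε := 1 - ∑ x, N (A x *ᵥ ψ) with hε
  have hβ : 1 - N (T *ᵥ ψ) ≤ ε := by rw [hTN]; linarith
  have hα : N r ≤ ε := by
    rw [hrN]; have := hDN ψ; rw [hψ] at this; linarith
  have hDA : ∑ x, N (D *ᵥ (P x *ᵥ ψ) - A x *ᵥ ψ) =
      ∑ j : S, a j * ‖r j‖ ^ 2 + ∑ p ∈ Sᶜ, a p * (a p * ‖F ψ p‖ ^ 2) := by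
    have : ∑ x, N (D *ᵥ (P x *ᵥ ψ) - A x *ᵥ ψ) = ∑ p, ‖h p - (a p : ℂ) * F ψ p‖ ^ 2 := by
      rw [Fintype.sum_prod_type]
      simp only [hDP, hAv, ← mulVec_sub, N_iso _ (hG _)]
      rfl
    rw [this, hsplit]
    congr 1
    · refine Finset.sum_congr rfl fun j _ => ?_
      have e1 : h j = ((√(a j) : ℝ) : ℂ) * u j := by simp [h]
      have e2 : (a j : ℂ) = ((√(a j) : ℝ) : ℂ) * ((√(a j) : ℝ) : ℂ) := by
        rw [← Complex.ofReal_mul, Real.mul_self_sqrt (ha0 _)]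
      have e3 : h j - (a j : ℂ) * F ψ j = ((√(a j) : ℝ) : ℂ) * r j := by
        rw [e1, hr, Pi.sub_apply, hTv]
        linear_combination (-F ψ j) * e2
      rw [e3, norm_mul, Complex.norm_real, Real.norm_eq_abs, mul_pow, sq_abs, Real.sq_sqrt (ha0 _)]
    · refine Finset.sum_congr rfl fun p hp => ?_
      simp only [h, Finset.mem_compl.1 hp, dite_false, zero_sub, norm_neg, norm_mul,
        Complex.norm_real, Real.norm_eq_abs, mul_pow, sq_abs]
      ring
  have hall : ∑ p, a p * ‖F ψ p‖ ^ 2 = 1 := by rw [hF1, hψ]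
  have hδ : ∑ p ∈ Sᶜ, a p * (a p * ‖F ψ p‖ ^ 2) ≤ ε := by
    have h1 : ∑ p ∈ Sᶜ, a p * (a p * ‖F ψ p‖ ^ 2) ≤ ∑ p ∈ Sᶜ, a p * ‖F ψ p‖ ^ 2 :=
      Finset.sum_le_sum fun p _ =>
        mul_le_of_le_one_left (mul_nonneg (ha0 p) (sq_nonneg _)) (ha1 p)
    have h2 := Finset.sum_add_sum_compl S (fun p => a p * ‖F ψ p‖ ^ 2)
    rw [hall, ← hTN] at h2
    linarith
  have hγ : ∑ j : S, (1 - a j) * ‖(T *ᵥ ψ) j‖ ^ 2 ≤ ε := by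
    simp only [hTn]
    rw [Finset.sum_coe_sort S (fun p => (1 - a p) * (a p * ‖F ψ p‖ ^ 2))]
    have h1 : ∑ p ∈ S, (1 - a p) * (a p * ‖F ψ p‖ ^ 2) ≤
        ∑ p, (1 - a p) * (a p * ‖F ψ p‖ ^ 2) :=
      Finset.sum_le_sum_of_subset_of_nonneg (Finset.subset_univ _) fun p _ _ =>
        mul_nonneg (by linarith [ha1 p]) (mul_nonneg (ha0 p) (sq_nonneg _))
    refine h1.trans (le_of_eq ?_)
    simp only [sub_mul, one_mul, Finset.sum_sub_distrib]
    rw [hall, hε, hF2]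
  have hη : ∑ x, N (P x *ᵥ ψ - D *ᵥ (P x *ᵥ ψ)) ≤
      2 * ∑ j : S, (1 - a j) * ‖r j‖ ^ 2 + 2 * ∑ j : S, (1 - a j) * ‖(T *ᵥ ψ) j‖ ^ 2 := by
    calc ∑ x, N (P x *ᵥ ψ - D *ᵥ (P x *ᵥ ψ))
        ≤ ∑ x, (N (P x *ᵥ ψ) - N (D *ᵥ (P x *ᵥ ψ))) := Finset.sum_le_sum fun x _ => hDN _
      _ = ∑ j : S, (1 - a j) * ‖u j‖ ^ 2 := by
          rw [Finset.sum_sub_distrib, hPN, hDPN, ← Finset.sum_sub_distrib]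
          exact Finset.sum_congr rfl fun j _ => by ring
      _ ≤ _ := by
          rw [Finset.mul_sum, Finset.mul_sum, ← Finset.sum_add_distrib]
          refine Finset.sum_le_sum fun j _ => ?_
          have e : u j = r j + (T *ᵥ ψ) j := by simp [hr]
          have := norm_add_sq_le2 (r j) ((T *ᵥ ψ) j)
          rw [← e] at this
          have := mul_le_mul_of_nonneg_left this (sub_nonneg.2 (ha1 j))
          linarith
  have hsumr : ∑ j : S, (1 - a j) * ‖r j‖ ^ 2 + ∑ j : S, a j * ‖r j‖ ^ 2 = N r := by
    rw [← Finset.sum_add_distrib, N]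
    exact Finset.sum_congr rfl fun j _ => by ring
  have hfin : ∑ x, N ((A x - P x) *ᵥ ψ) ≤ 3 / 2 * ∑ x, N (P x *ᵥ ψ - D *ᵥ (P x *ᵥ ψ)) +
      3 * ∑ x, N (D *ᵥ (P x *ᵥ ψ) - A x *ᵥ ψ) := by
    rw [Finset.mul_sum, Finset.mul_sum, ← Finset.sum_add_distrib]
    refine Finset.sum_le_sum fun x _ => ?_
    have := N_add_le (P x *ᵥ ψ - D *ᵥ (P x *ᵥ ψ)) (D *ᵥ (P x *ᵥ ψ) - A x *ᵥ ψ)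
    rw [sub_add_sub_cancel] at this
    refine le_trans (le_of_eq ?_) this
    simp only [N, sub_mulVec, Pi.sub_apply]
    exact Finset.sum_congr rfl fun i _ => by rw [norm_sub_rev]
  linarith

end Ortho

/-- Orthogonalization lemma, finite-dimensional case: if a POVM
`{A_x}` on `ℂⁿ` satisfies `Σ_x ⟨ψ, A_x² ψ⟩ > 1 − ε` for a unit vector `ψ`, then
there is a PVM `{P_x}` with `Σ_x ⟨ψ, (A_x − P_x)² ψ⟩ < 9ε`. -/
theorem orthogonalization_lemma_finiteDim {n : ℕ} {X : Type*} [Fintype X]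
    (ψ : Fin n → ℂ) (hψ : star ψ ⬝ᵥ ψ = 1) (ε : ℝ)
    (A : X → Matrix (Fin n) (Fin n) ℂ)
    (hA : ∀ x, (A x).PosSemidef) (hAsum : ∑ x, A x = 1)
    (h : 1 - ε < (star ψ ⬝ᵥ ((∑ x, A x * A x) *ᵥ ψ)).re) :
    ∃ P : X → Matrix (Fin n) (Fin n) ℂ,
      (∀ x, (P x).IsHermitian ∧ P x * P x = P x) ∧ (∑ x, P x = 1) ∧
      (star ψ ⬝ᵥ ((∑ x, (A x - P x) * (A x - P x)) *ᵥ ψ)).re < 9 * ε := by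
  classical
  have key : ∀ B : X → Matrix (Fin n) (Fin n) ℂ, (∀ x, (B x).IsHermitian) →
      (star ψ ⬝ᵥ ((∑ x, B x * B x) *ᵥ ψ)).re = ∑ x, Ortho.N (B x *ᵥ ψ) := by
    intro B hB
    rw [Matrix.sum_mulVec, dotProduct_sum, Complex.re_sum]
    refine Finset.sum_congr rfl fun x _ => ?_
    have := Ortho.N_mulVec (B x) ψ
    rw [(hB x).eq] at this
    rw [← this, Complex.ofReal_re]
  have hψ' : Ortho.N ψ = 1 := by
    rw [Ortho.N_eq] at hψ; exact_mod_cast hψ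
  obtain ⟨P, h1, h2, h3⟩ := Ortho.core ψ hψ' A
    (fun x => ((hA x).1.eigenvectorUnitary : Matrix (Fin n) (Fin n) ℂ))
    (fun x => by
      have := Unitary.coe_star_mul_self (hA x).1.eigenvectorUnitary
      simpa [star_eq_conjTranspose] using this)
    (fun p => (hA p.1).1.eigenvalues p.2)
    (fun p => (hA p.1).eigenvalues_nonneg p.2)
    (fun p => by
      obtain ⟨x, i⟩ := p
      set e := (hA x).1.eigenvectorBasis i with he
      have hs : star (e : Fin n → ℂ) ⬝ᵥ ((∑ y, A y) *ᵥ (e : Fin n → ℂ)) = 1 := by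
        rw [hAsum, one_mulVec, dotProduct_comm, ← EuclideanSpace.inner_eq_star_dotProduct,
          inner_self_eq_norm_sq_to_K, (hA x).1.eigenvectorBasis.orthonormal.1 i]
        simp
      rw [Matrix.sum_mulVec, dotProduct_sum] at hs
      have hs' := congrArg Complex.re hs
      rw [Complex.re_sum, Complex.one_re] at hs'
      have h5 : (hA x).1.eigenvalues i ≤ 1 := by
        rw [(hA x).1.eigenvalues_eq i, ← hs']
        exact Finset.single_le_sum
          (f := fun y => (star (e : Fin n → ℂ) ⬝ᵥ (A y *ᵥ (e : Fin n → ℂ))).re)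
          (fun y _ => (hA y).re_dotProduct_nonneg _) (Finset.mem_univ x)
      exact h5)
    (by
      have ht := congrArg Matrix.trace hAsum
      rw [Matrix.trace_sum, Matrix.trace_one, Fintype.card_fin] at ht
      rw [Fintype.sum_prod_type]
      have : ∀ x, (A x).trace = ((∑ i, (hA x).1.eigenvalues i : ℝ) : ℂ) := by
        intro x
        rw [(hA x).1.trace_eq_sum_eigenvalues]; push_cast; rfl
      simp only [this] at ht
      exact_mod_cast ht)
    (fun x => by
      have := (hA x).1.spectral_theorem
      rw [Unitary.conjStarAlgAut_apply] at this
      exact this)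
    hAsum
  refine ⟨P, h1, h2, ?_⟩
  rw [key A fun x => (hA x).1] at h
  rw [key (fun x => A x - P x) fun x => (hA x).1.sub (h1 x).1]
  linarith
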